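/- arXiv:1908.01663 — 2 statements merged into one kernel-verified Lean document; each statement's English description precedes it below -/
import Mathlib

section
/- Let ω ∈ ℂ and ρ > 0. Then lim_{ε→0⁺} ∫_{−1}^{1} e^{iωρ cosh β} ( 1/(β + iε)³ − 1/(β − iε)³ ) dβ = π ω ρ e^{iωρ}. (Only the β² term of the Taylor expansion of e^{iωρ cosh β} at β = 0 contributes to the jump of the triple-pole Cauchy integral; all other terms give jump zero.) -/
/-!
The difference of the two poles is `i k(ε, β)` with the real kernel
`k(ε, β) = 2ε(ε² - 3β²)/(β² + ε²)³`.  Writing the weight as `g(β) = g(0) + c β² + R(β)` with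
`c = iωρ e^{iωρ}/2` and `R(β) = O(|β|³)` (`weight_remainder_bound`), the three parts behave as
follows for `ε → 0⁺`.

* `∫ k` and `∫ β² k` over `[-1, 1]` have elementary antiderivatives; the first integral tends
  to `0`, the second, through an arctangent, to `-2π`.
* `|β|³ |k(ε, β)| ≤ 6` uniformly and `k(ε, β) → 0` for every `β ≠ 0`, so `∫ R k → 0` by
  dominated convergence (`tendsto_integral_remainder`).

The limit is therefore `i c (-2π) = πωρ e^{iωρ}`.
-/

open Real MeasureTheory Set Filter

/-- The real kernel `k` for which `1/(β + iε)³ - 1/(β - iε)³ = i k(ε, β)`. -/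
noncomputable def jumpKernel (ε β : ℝ) : ℝ := 2 * ε * (ε ^ 2 - 3 * β ^ 2) / (β ^ 2 + ε ^ 2) ^ 3

lemma pole_difference {ε : ℝ} (hε : 0 < ε) (β : ℝ) :
    1 / ((β : ℂ) + Complex.I * (ε : ℂ)) ^ 3 - 1 / ((β : ℂ) - Complex.I * (ε : ℂ)) ^ 3
      = Complex.I * (jumpKernel ε β : ℂ) := by
  have h1 : (β : ℂ) + Complex.I * (ε : ℂ) ≠ 0 := by
    intro h
    have := congrArg Complex.im h
    simp at this
    exact hε.ne' this
  have h2 : (β : ℂ) - Complex.I * (ε : ℂ) ≠ 0 := by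
    intro h
    have := congrArg Complex.im h
    simp at this
    exact hε.ne' this
  have h3 : (β : ℂ) ^ 2 + (ε : ℂ) ^ 2
      = ((β : ℂ) + Complex.I * (ε : ℂ)) * ((β : ℂ) - Complex.I * (ε : ℂ)) := by
    linear_combination (ε : ℂ) ^ 2 * Complex.I_sq
  unfold jumpKernel
  push_cast
  rw [h3, mul_pow, div_sub_div _ _ (pow_ne_zero 3 h1) (pow_ne_zero 3 h2), mul_div_assoc']
  congr 1
  linear_combination (-2 * Complex.I * (ε : ℂ) ^ 3) * Complex.I_sq

lemma continuous_jumpKernel {ε : ℝ} (hε : 0 < ε) : Continuous (jumpKernel ε) := by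
  unfold jumpKernel
  refine Continuous.div (by fun_prop) (by fun_prop) fun β => ?_
  positivity

lemma integral_jumpKernel {ε : ℝ} (hε : 0 < ε) :
    ∫ β in (-1 : ℝ)..1, jumpKernel ε β = 4 * ε / (1 + ε ^ 2) ^ 2 := by
  have hd : ∀ β : ℝ,
      HasDerivAt (fun β : ℝ => 2 * ε * β / (β ^ 2 + ε ^ 2) ^ 2) (jumpKernel ε β) β := by
    intro β
    have hp : β ^ 2 + ε ^ 2 ≠ 0 := by positivity
    have hq : HasDerivAt (fun β : ℝ => (β ^ 2 + ε ^ 2) ^ 2) (2 * (β ^ 2 + ε ^ 2) * (2 * β)) β := by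
      simpa using (((hasDerivAt_id β).pow 2).add_const (ε ^ 2)).fun_pow 2
    have hn : HasDerivAt (fun β : ℝ => 2 * ε * β) (2 * ε) β := by
      simpa using (hasDerivAt_id β).const_mul (2 * ε)
    refine (hn.fun_div hq (pow_ne_zero 2 hp)).congr_deriv ?_
    unfold jumpKernel
    field_simp
    ring
  rw [intervalIntegral.integral_eq_sub_of_hasDerivAt (fun β _ => hd β)
    ((continuous_jumpKernel hε).intervalIntegrable _ _)]
  ring

lemma integral_sq_mul_jumpKernel {ε : ℝ} (hε : 0 < ε) :
    ∫ β in (-1 : ℝ)..1, β ^ 2 * jumpKernel ε β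
      = 4 * ε / (1 + ε ^ 2) ^ 2 + 4 * ε / (1 + ε ^ 2) - 4 * arctan ε⁻¹ := by
  have hd : ∀ β : ℝ,
      HasDerivAt (fun β : ℝ => 2 * ε * β ^ 3 / (β ^ 2 + ε ^ 2) ^ 2 + 2 * ε * β / (β ^ 2 + ε ^ 2)
        - 2 * arctan (β * ε⁻¹)) (β ^ 2 * jumpKernel ε β) β := by
    intro β
    have hp : β ^ 2 + ε ^ 2 ≠ 0 := by positivity
    have hb : HasDerivAt (fun β : ℝ => β ^ 2 + ε ^ 2) (2 * β) β := by
      simpa using ((hasDerivAt_id β).pow 2).add_const (ε ^ 2)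
    have hq : HasDerivAt (fun β : ℝ => (β ^ 2 + ε ^ 2) ^ 2) (2 * (β ^ 2 + ε ^ 2) * (2 * β)) β := by
      simpa using hb.fun_pow 2
    have hn : HasDerivAt (fun β : ℝ => 2 * ε * β) (2 * ε) β := by
      simpa using (hasDerivAt_id β).const_mul (2 * ε)
    have hn3 : HasDerivAt (fun β : ℝ => 2 * ε * β ^ 3) (2 * ε * (3 * β ^ 2)) β := by
      simpa using ((hasDerivAt_id β).pow 3).const_mul (2 * ε)
    have ha : HasDerivAt (fun β : ℝ => 2 * arctan (β * ε⁻¹))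
        (2 * (1 / (1 + (β * ε⁻¹) ^ 2) * ε⁻¹)) β := by
      have h0 : HasDerivAt (fun β : ℝ => β * ε⁻¹) ε⁻¹ β := by
        simpa using (hasDerivAt_id β).mul_const ε⁻¹
      exact h0.arctan.const_mul 2
    refine (((hn3.fun_div hq (pow_ne_zero 2 hp)).fun_add (hn.fun_div hb hp)).fun_sub ha).congr_deriv
      ?_
    have h1 : 1 / (1 + (β * ε⁻¹) ^ 2) * ε⁻¹ = ε / (β ^ 2 + ε ^ 2) := by
      field_simp
      ring
    rw [h1]
    unfold jumpKernel
    field_simp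
    ring
  rw [intervalIntegral.integral_eq_sub_of_hasDerivAt (fun β _ => hd β)
    (((continuous_pow 2).mul (continuous_jumpKernel hε)).intervalIntegrable _ _)]
  rw [neg_mul, arctan_neg, one_mul]
  ring

lemma tendsto_integral_jumpKernel :
    Tendsto (fun ε : ℝ => ∫ β in (-1 : ℝ)..1, jumpKernel ε β) (nhdsWithin 0 (Set.Ioi 0))
      (nhds 0) := by
  have h : Tendsto (fun ε : ℝ => 4 * ε / (1 + ε ^ 2) ^ 2) (nhdsWithin 0 (Set.Ioi 0)) (nhds 0) := by
    have hc : Continuous (fun ε : ℝ => 4 * ε / (1 + ε ^ 2) ^ 2) :=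
      Continuous.div (by fun_prop) (by fun_prop) fun ε => by positivity
    simpa using (hc.tendsto 0).mono_left nhdsWithin_le_nhds
  refine h.congr' ?_
  filter_upwards [self_mem_nhdsWithin] with ε hε
  exact (integral_jumpKernel hε).symm

lemma tendsto_integral_sq_mul_jumpKernel :
    Tendsto (fun ε : ℝ => ∫ β in (-1 : ℝ)..1, β ^ 2 * jumpKernel ε β)
      (nhdsWithin 0 (Set.Ioi 0)) (nhds (-(2 * π))) := by
  have h : Tendsto (fun ε : ℝ => 4 * ε / (1 + ε ^ 2) ^ 2 + 4 * ε / (1 + ε ^ 2))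
      (nhdsWithin 0 (Set.Ioi 0)) (nhds 0) := by
    have hc : Continuous (fun ε : ℝ => 4 * ε / (1 + ε ^ 2) ^ 2 + 4 * ε / (1 + ε ^ 2)) :=
      (Continuous.div (by fun_prop) (by fun_prop) fun ε => by positivity).add
        (Continuous.div (by fun_prop) (by fun_prop) fun ε => by positivity)
    simpa using (hc.tendsto 0).mono_left nhdsWithin_le_nhds
  have ha : Tendsto (fun ε : ℝ => arctan ε⁻¹) (nhdsWithin 0 (Set.Ioi 0)) (nhds (π / 2)) :=
    (tendsto_arctan_atTop.mono_right nhdsWithin_le_nhds).comp tendsto_inv_nhdsGT_zero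
  have hs := h.sub (ha.const_mul 4)
  rw [show (0 : ℝ) - 4 * (π / 2) = -(2 * π) by ring] at hs
  refine hs.congr' ?_
  filter_upwards [self_mem_nhdsWithin] with ε hε
  exact (integral_sq_mul_jumpKernel hε).symm

lemma abs_cube_mul_jumpKernel_le {ε : ℝ} (hε : 0 < ε) (β : ℝ) :
    |β| ^ 3 * |jumpKernel ε β| ≤ 6 := by
  have hp : 0 < β ^ 2 + ε ^ 2 := by positivity
  unfold jumpKernel
  rw [abs_div, abs_of_pos (pow_pos hp 3), mul_div_assoc', div_le_iff₀ (pow_pos hp 3), abs_mul,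
    abs_of_pos (by positivity : 0 < 2 * ε)]
  have h1 : |ε ^ 2 - 3 * β ^ 2| ≤ 3 * (β ^ 2 + ε ^ 2) := by
    rw [abs_le]
    constructor <;> nlinarith [sq_nonneg β, sq_nonneg ε]
  have h2 : |β| ^ 3 * ε ≤ (β ^ 2 + ε ^ 2) ^ 2 := by
    rw [← sq_abs β]
    have hb := abs_nonneg β
    have : |β| * ε ≤ |β| ^ 2 + ε ^ 2 := by nlinarith [sq_nonneg (|β| - ε)]
    nlinarith [mul_le_mul_of_nonneg_left this (sq_nonneg |β|), sq_nonneg (|β| * ε),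
      sq_nonneg (ε ^ 2)]
  calc |β| ^ 3 * (2 * ε * |ε ^ 2 - 3 * β ^ 2|)
      = 2 * ((|β| ^ 3 * ε) * |ε ^ 2 - 3 * β ^ 2|) := by ring
    _ ≤ 2 * ((β ^ 2 + ε ^ 2) ^ 2 * (3 * (β ^ 2 + ε ^ 2))) := by gcongr
    _ = 6 * (β ^ 2 + ε ^ 2) ^ 3 := by ring

lemma tendsto_jumpKernel {β : ℝ} (hβ : β ≠ 0) :
    Tendsto (fun ε : ℝ => jumpKernel ε β) (nhdsWithin 0 (Set.Ioi 0)) (nhds 0) := by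
  have hc : Continuous (fun ε : ℝ => jumpKernel ε β) := by
    unfold jumpKernel
    exact Continuous.div (by fun_prop) (by fun_prop) fun ε => by positivity
  have h0 : jumpKernel 0 β = 0 := by simp [jumpKernel]
  simpa [h0] using (hc.tendsto 0).mono_left nhdsWithin_le_nhds

/-- A remainder of third order at `0` does not contribute to the jump. -/
lemma tendsto_integral_remainder {R : ℝ → ℂ} (hR : Continuous R) {C : ℝ}
    (hC : ∀ β : ℝ, |β| ≤ 1 → ‖R β‖ ≤ C * |β| ^ 3) :
    Tendsto (fun ε : ℝ => ∫ β in (-1 : ℝ)..1, R β * (jumpKernel ε β : ℂ))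
      (nhdsWithin 0 (Set.Ioi 0)) (nhds 0) := by
  have hC0 : 0 ≤ C := by
    have := (norm_nonneg _).trans (hC 1 (by simp))
    simpa using this
  have key := intervalIntegral.tendsto_integral_filter_of_dominated_convergence
    (μ := volume) (a := (-1 : ℝ)) (b := 1) (l := nhdsWithin (0 : ℝ) (Set.Ioi 0))
    (F := fun ε β => R β * (jumpKernel ε β : ℂ)) (f := fun _ => (0 : ℂ)) (fun _ => C * 6)
    ?_ ?_ ?_ ?_
  · simpa using key
  · filter_upwards [self_mem_nhdsWithin] with ε hε
    exact (hR.mul (Complex.continuous_ofReal.comp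
      (continuous_jumpKernel hε))).aestronglyMeasurable
  · filter_upwards [self_mem_nhdsWithin] with ε hε
    refine Eventually.of_forall fun β hβ => ?_
    rw [uIoc_of_le (by norm_num)] at hβ
    rw [norm_mul, Complex.norm_real, Real.norm_eq_abs]
    calc ‖R β‖ * |jumpKernel ε β| ≤ C * |β| ^ 3 * |jumpKernel ε β| := by
          gcongr
          exact hC β (abs_le.2 ⟨hβ.1.le, hβ.2⟩)
      _ = C * (|β| ^ 3 * |jumpKernel ε β|) := by ring
      _ ≤ C * 6 := by
          gcongr
          exact abs_cube_mul_jumpKernel_le hε β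
  · exact intervalIntegrable_const
  · have hne : ∀ᵐ β : ℝ, β ≠ 0 := by simp [ae_iff]
    filter_upwards [hne] with β hβ _
    have := ((Complex.continuous_ofReal.tendsto 0).comp (tendsto_jumpKernel hβ)).const_mul (R β)
    simpa using this

lemma cosh_remainder_bound {β : ℝ} (hβ : |β| ≤ 1) :
    |Real.cosh β - 1 - β ^ 2 / 2| ≤ |β| ^ 3 := by
  have h1 := Real.exp_bound hβ (n := 3) (by norm_num)
  have h2 := Real.exp_bound (x := -β) (by rwa [abs_neg]) (n := 3) (by norm_num)
  have h3 : 0 ≤ |β| ^ 3 := by positivity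
  simp only [Finset.sum_range_succ, Finset.sum_range_zero, Nat.factorial, abs_neg] at h1 h2
  norm_num at h1 h2
  rw [abs_le] at h1 h2
  rw [Real.cosh_eq, abs_le]
  constructor <;> linarith [h1.1, h1.2, h2.1, h2.2]

/-- Second-order Taylor expansion of the weight at `0`, with remainder `O(|β|³)`. -/
lemma weight_remainder_bound (z : ℂ) : ∃ C : ℝ, ∀ β : ℝ, |β| ≤ 1 →
    ‖Complex.exp (z * (Real.cosh β : ℂ)) - Complex.exp z
      - z / 2 * Complex.exp z * (β : ℂ) ^ 2‖ ≤ C * |β| ^ 3 := by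
  refine ⟨‖Complex.exp z‖ * ((2 * ‖z‖) ^ 2 * Real.exp (2 * ‖z‖) + ‖z‖), fun β hβ => ?_⟩
  set w : ℂ := z * ((Real.cosh β - 1 : ℝ) : ℂ) with hw
  have hsplit : Complex.exp (z * (Real.cosh β : ℂ)) - Complex.exp z
      - z / 2 * Complex.exp z * (β : ℂ) ^ 2
      = Complex.exp z * ((Complex.exp w - 1 - w)
        + z * ((Real.cosh β - 1 - β ^ 2 / 2 : ℝ) : ℂ)) := by
    have : z * (Real.cosh β : ℂ) = z + w := by
      rw [hw]
      push_cast
      ring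
    rw [this, Complex.exp_add, hw]
    push_cast
    ring
  have hc := cosh_remainder_bound hβ
  have hb0 := abs_nonneg β
  have hb32 : |β| ^ 3 ≤ β ^ 2 := by
    rw [← sq_abs β]
    exact pow_le_pow_of_le_one hb0 hβ (by norm_num)
  have hc1 : |Real.cosh β - 1| ≤ 2 * β ^ 2 := by
    rw [abs_le] at hc ⊢
    constructor <;> nlinarith [hc.1, hc.2, sq_nonneg β]
  have hwn : ‖w‖ ≤ 2 * ‖z‖ * β ^ 2 := by
    rw [hw, norm_mul, Complex.norm_real, Real.norm_eq_abs]
    nlinarith [mul_le_mul_of_nonneg_left hc1 (norm_nonneg z)]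
  have hb1 : β ^ 2 ≤ 1 := by
    rw [← sq_abs β]
    exact pow_le_one₀ hb0 hβ
  have hwn1 : ‖w‖ ≤ 2 * ‖z‖ :=
    hwn.trans (mul_le_of_le_one_right (by positivity) hb1)
  have hexp : ‖Complex.exp w - 1 - w‖ ≤ ‖w‖ ^ 2 * Real.exp ‖w‖ := by
    have := Complex.norm_exp_sub_sum_le_norm_mul_exp w 2
    simpa [Finset.sum_range_succ, sub_sub] using this
  have hb43 : (β ^ 2) ^ 2 ≤ |β| ^ 3 := by
    rw [← sq_abs β, ← pow_mul]
    exact pow_le_pow_of_le_one hb0 hβ (by norm_num)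
  have hexp' : ‖Complex.exp w - 1 - w‖ ≤ (2 * ‖z‖) ^ 2 * Real.exp (2 * ‖z‖) * |β| ^ 3 :=
    calc ‖Complex.exp w - 1 - w‖ ≤ ‖w‖ ^ 2 * Real.exp ‖w‖ := hexp
      _ ≤ (2 * ‖z‖ * β ^ 2) ^ 2 * Real.exp (2 * ‖z‖) := by gcongr
      _ = (2 * ‖z‖) ^ 2 * Real.exp (2 * ‖z‖) * (β ^ 2) ^ 2 := by ring
      _ ≤ (2 * ‖z‖) ^ 2 * Real.exp (2 * ‖z‖) * |β| ^ 3 := by gcongr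
  rw [hsplit, norm_mul, mul_assoc, add_mul]
  gcongr
  refine (norm_add_le _ _).trans (add_le_add hexp' ?_)
  rw [norm_mul, Complex.norm_real, Real.norm_eq_abs]
  gcongr

/-- The jump of the triple-pole Cauchy-type integral across `ε = 0`:
`lim_{ε→0⁺} ∫_{−1}^{1} e^{iωρ cosh β} (1/(β+iε)³ − 1/(β−iε)³) dβ = πωρ e^{iωρ}`. -/
theorem cauchy_jump_triple_pole (ω : ℂ) (ρ : ℝ) (hρ : 0 < ρ) :
    Tendsto (fun ε : ℝ => ∫ β in (-1:ℝ)..1,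
        Complex.exp (Complex.I * ω * (ρ : ℂ) * (Real.cosh β : ℂ)) *
          (1 / ((β : ℂ) + Complex.I * (ε : ℂ))^3 - 1 / ((β : ℂ) - Complex.I * (ε : ℂ))^3))
      (nhdsWithin 0 (Set.Ioi 0))
      (nhds ((π : ℂ) * ω * (ρ : ℂ) * Complex.exp (Complex.I * ω * (ρ : ℂ)))) := by
  set z : ℂ := Complex.I * ω * (ρ : ℂ) with hz
  obtain ⟨C, hC⟩ := weight_remainder_bound z
  set R : ℝ → ℂ := fun β => Complex.exp (z * (Real.cosh β : ℂ)) - Complex.exp z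
      - z / 2 * Complex.exp z * (β : ℂ) ^ 2 with hRdef
  have hR : Continuous R := by
    have := Real.continuous_cosh
    fun_prop
  have h0 := (Complex.continuous_ofReal.tendsto _).comp tendsto_integral_jumpKernel
  have h2 := (Complex.continuous_ofReal.tendsto _).comp tendsto_integral_sq_mul_jumpKernel
  have h3 := tendsto_integral_remainder hR hC
  have hsum := (((h0.const_mul (Complex.exp z)).add
    (h2.const_mul (z / 2 * Complex.exp z))).add h3).const_mul Complex.I
  have hlim : Complex.I * (Complex.exp z * ((0 : ℝ) : ℂ)
      + z / 2 * Complex.exp z * ((-(2 * π) : ℝ) : ℂ) + 0)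
      = (π : ℂ) * ω * (ρ : ℂ) * Complex.exp z := by
    rw [hz]
    push_cast
    linear_combination
      (-(π : ℂ) * ω * (ρ : ℂ) * Complex.exp (Complex.I * ω * (ρ : ℂ))) * Complex.I_sq
  rw [hlim] at hsum
  refine hsum.congr' ?_
  filter_upwards [self_mem_nhdsWithin] with ε hε
  have hk : Continuous fun β : ℝ => (jumpKernel ε β : ℂ) :=
    Complex.continuous_ofReal.comp (continuous_jumpKernel hε)
  simp only [Function.comp_apply]
  rw [← intervalIntegral.integral_ofReal, ← intervalIntegral.integral_ofReal,
    ← intervalIntegral.integral_const_mul, ← intervalIntegral.integral_const_mul,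
    ← intervalIntegral.integral_add, ← intervalIntegral.integral_add,
    ← intervalIntegral.integral_const_mul]
  · refine intervalIntegral.integral_congr fun β _ => ?_
    simp only [pole_difference hε, hRdef]
    push_cast
    ring
  all_goals
    refine Continuous.intervalIntegrable ?_ _ _
    push_cast
    fun_prop
end

section
/- Let W⁰ = {(x₁, 0) ∈ ℝ² : x₁ ≥ 0}, Q = ℝ² \ W⁰, and ω ∈ ℂ with Im ω > 0. Suppose w : ℝ² → ℂ is continuous on ℝ², twice continuously differentiable on the open set Q, satisfies Δw + ω² w = 0 at every point of Q, vanishes on W⁰, and both w and its gradient ∇w (defined on Q) are square-integrable over Q. Then w ≡ 0 on ℝ². (Uniqueness for the Helmholtz equation with complex wavenumber in the slit plane, with Dirichlet condition on the half-line.) -/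
/-!
The proof is an energy argument: testing the equation against `conj w` gives
`∫_Q |∇w|² = ω² ∫_Q |w|²`. The right-hand side must be a nonnegative real, while `ω²` is not one
because `Im ω > 0`; hence `∫_Q |w|² = 0`, and `w = 0` by continuity.

To avoid boundary terms, both at the slit and at infinity, `conj w` is multiplied by a cutoff
`k_N(x) = χ(x / N) · h(N |w(x)|²)`, where `χ` is a compactly supported bump equal to `1` near the
origin and `h` is smooth with `h = 0` on `(-∞, 1]` and `h = 1` on `[2, ∞)`. As `w` is continuous and
vanishes on the slit, the set `{N |w|² ≥ 1}` is closed and contained in `Q`, so the fields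
`k_N conj(w) ∂ᵢw` are `C¹` with compact support in `Q` (`greenField_props`), and their divergence
has integral zero. That divergence is `k_N (|∇w|² - ω² |w|²)` plus a remainder `∇k_N · conj(w) ∇w`.
Because `t * deriv h t` is bounded, the remainder is dominated by a constant multiple of
`|w|² + |∇w|²` uniformly in `N` (`norm_remainder_le`), and at each point where `w ≠ 0` it vanishes
for large `N` (`eventually_cutoff`); at points where `w = 0` the whole divergence is zero. Dominated
convergence gives the energy identity with `|∇w|²` restricted to `{w ≠ 0}` (`green_identity`),
which is enough for the conclusion.
-/

open Real MeasureTheory Set Filter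
open scoped Topology ComplexConjugate


/-! ### Integration of derivatives and cutoff functions -/

lemma integral_fderiv_apply_eq_zero {F : ℝ × ℝ → ℂ} (hF : ContDiff ℝ 1 F)
    (hc : HasCompactSupport F) (e : ℝ × ℝ) : ∫ x, fderiv ℝ F x e = 0 := by
  have hi : Integrable (fun x => fderiv ℝ F x e) := by
    refine Continuous.integrable_of_hasCompactSupport ?_ (hc.fderiv_apply ℝ e)
    exact (hF.continuous_fderiv one_ne_zero).clm_apply continuous_const
  have h := integral_mul_fderiv_eq_neg_fderiv_mul_of_integrable (μ := (volume : Measure (ℝ × ℝ)))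
    (f := fun _ : ℝ × ℝ => (1 : ℂ)) (g := F) (v := e) (by simp) (by simpa using hi)
    (by simpa using hF.continuous.integrable_of_hasCompactSupport hc)
    (fun x _ => by simp) (fun x _ => hF.differentiable one_ne_zero x)
  simpa using h

/-- A `C¹` cutoff in the value of the solution. Boundedness of `t * deriv h t` is what makes the
derivative of `h(N |w|²)` harmless uniformly in `N`. -/
lemma exists_level_cutoff : ∃ h : ℝ → ℝ, ContDiff ℝ 1 h ∧ (∀ t, 0 ≤ h t ∧ h t ≤ 1) ∧
    (∀ t ≤ 1, h t = 0) ∧ (∀ t, 2 ≤ t → h t = 1) ∧ (∀ t, 2 < t → deriv h t = 0) ∧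
    ∃ C, ∀ t, |t * deriv h t| ≤ C := by
  have hs : ContDiff ℝ 1 (fun t : ℝ => smoothTransition (t - 1)) :=
    (smoothTransition.contDiff (n := 1)).comp (contDiff_id.sub contDiff_const)
  have h2 : ∀ t : ℝ, 2 < t → deriv (fun t : ℝ => smoothTransition (t - 1)) t = 0 := by
    intro t ht
    have : (fun t : ℝ => smoothTransition (t - 1)) =ᶠ[𝓝 t] fun _ => 1 := by
      filter_upwards [lt_mem_nhds ht] with s hs
      exact smoothTransition.one_of_one_le (by linarith)
    simp [this.deriv_eq]
  have h1 : ∀ t : ℝ, t < 1 → deriv (fun t : ℝ => smoothTransition (t - 1)) t = 0 := by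
    intro t ht
    have : (fun t : ℝ => smoothTransition (t - 1)) =ᶠ[𝓝 t] fun _ => 0 := by
      filter_upwards [gt_mem_nhds ht] with s hs
      exact smoothTransition.zero_of_nonpos (by linarith)
    simp [this.deriv_eq]
  refine ⟨_, hs, fun t => ⟨smoothTransition.nonneg _, smoothTransition.le_one _⟩,
    fun t ht => smoothTransition.zero_of_nonpos (by linarith),
    fun t ht => smoothTransition.one_of_one_le (by linarith), h2, ?_⟩
  have hc : HasCompactSupport
      (fun t : ℝ => t * deriv (fun t : ℝ => smoothTransition (t - 1)) t) := by
    refine HasCompactSupport.intro (isCompact_Icc (a := (1 : ℝ)) (b := 2)) fun t ht => ?_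
    rw [mem_Icc, not_and_or, not_le, not_le] at ht
    rcases ht with ht | ht
    · simp [h1 t ht]
    · simp [h2 t ht]
  exact hc.exists_bound_of_continuous (continuous_id.mul (hs.continuous_deriv le_rfl))

lemma exists_space_cutoff : ∃ χ : ℝ × ℝ → ℝ, ContDiff ℝ 1 χ ∧ HasCompactSupport χ ∧
    (∀ x, 0 ≤ χ x ∧ χ x ≤ 1) ∧ (∀ᶠ x in 𝓝 0, χ x = 1 ∧ fderiv ℝ χ x = 0) ∧
    ∃ C, ∀ x, ‖fderiv ℝ χ x‖ ≤ C := by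
  let f : ContDiffBump (0 : ℝ × ℝ) := ⟨1, 2, one_pos, one_lt_two⟩
  have hf : ContDiff ℝ 1 f := f.contDiff
  have h1 : ∀ᶠ x in 𝓝 0, f x = 1 ∧ fderiv ℝ f x = 0 := by
    filter_upwards [f.eventuallyEq_one.eventuallyEq_nhds] with x hx
    exact ⟨hx.eq_of_nhds, by rw [hx.fderiv_eq]; exact fderiv_const_apply 1⟩
  exact ⟨f, hf, f.hasCompactSupport, fun x => ⟨f.nonneg, f.le_one⟩, h1,
    (f.hasCompactSupport.fderiv ℝ).exists_bound_of_continuous (hf.continuous_fderiv one_ne_zero)⟩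

/-! ### The truncated Green field -/

/-- The cutoff `χ(x / N) · h(N |w(x)|²)`, localising both to a ball of radius of order `N` and to
the region where `|w|` is not small. -/
noncomputable def cutoff (χ : ℝ × ℝ → ℝ) (h : ℝ → ℝ) (w : ℝ × ℝ → ℂ) (N : ℝ) (x : ℝ × ℝ) : ℝ :=
  χ (N⁻¹ • x) * h (N * ‖w x‖ ^ 2)

/-- The component `k conj(w) ∂ₑw` in direction `e` of the vector field whose divergence enters
Green's identity for `w` with weight `k`. -/
noncomputable def greenField (k : ℝ × ℝ → ℝ) (w : ℝ × ℝ → ℂ) (e x : ℝ × ℝ) : ℂ :=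
  (k x : ℂ) * conj (w x) * fderiv ℝ w x e

lemma differentiableAt_cutoff_and_fderiv {χ : ℝ × ℝ → ℝ} {h : ℝ → ℝ} {w : ℝ × ℝ → ℂ} (N : ℝ) {x : ℝ × ℝ}
    (hχ : ContDiff ℝ 1 χ) (hh : ContDiff ℝ 1 h) (hw : DifferentiableAt ℝ w x) (e : ℝ × ℝ) :
    DifferentiableAt ℝ (cutoff χ h w N) x ∧ fderiv ℝ (cutoff χ h w N) x e =
      N⁻¹ * fderiv ℝ χ (N⁻¹ • x) e * h (N * ‖w x‖ ^ 2) +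
      χ (N⁻¹ • x) * (deriv h (N * ‖w x‖ ^ 2) * (N * (2 * inner ℝ (w x) (fderiv ℝ w x e)))) := by
  have a1 : HasFDerivAt (fun y : ℝ × ℝ => χ (N⁻¹ • y))
      ((fderiv ℝ χ (N⁻¹ • x)).comp (N⁻¹ • ContinuousLinearMap.id ℝ (ℝ × ℝ))) x :=
    ((hχ.differentiable one_ne_zero (N⁻¹ • x)).hasFDerivAt).comp x
      ((hasFDerivAt_id x).const_smul N⁻¹)
  have a2 : HasFDerivAt (fun y : ℝ × ℝ => N * ‖w y‖ ^ 2) _ x :=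
    (hw.hasFDerivAt.norm_sq).const_mul N
  have a3 := (hh.differentiable one_ne_zero (N * ‖w x‖ ^ 2)).hasDerivAt.comp_hasFDerivAt x a2
  have a4 : HasFDerivAt (cutoff χ h w N) _ x := a1.mul a3
  refine ⟨a4.differentiableAt, ?_⟩
  rw [a4.fderiv]
  simp
  ring

lemma fderiv_greenField {k : ℝ × ℝ → ℝ} {w : ℝ × ℝ → ℂ} {x : ℝ × ℝ} (e : ℝ × ℝ)
    (hk : DifferentiableAt ℝ k x) (hw : DifferentiableAt ℝ w x)
    (hw2 : DifferentiableAt ℝ (fun y => fderiv ℝ w y e) x) :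
    fderiv ℝ (greenField k w e) x e = (k x : ℂ) * ((‖fderiv ℝ w x e‖ ^ 2 : ℝ) : ℂ) +
      (k x : ℂ) * conj (w x) * fderiv ℝ (fun y => fderiv ℝ w y e) x e +
      ((fderiv ℝ k x e : ℝ) : ℂ) * conj (w x) * fderiv ℝ w x e := by
  have a1 : HasFDerivAt (fun y => (k y : ℂ)) (Complex.ofRealCLM.comp (fderiv ℝ k x)) x :=
    Complex.ofRealCLM.hasFDerivAt.comp x hk.hasFDerivAt
  have a2 : HasFDerivAt (fun y => conj (w y))
      ((Complex.conjCLE : ℂ →L[ℝ] ℂ).comp (fderiv ℝ w x)) x :=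
    (Complex.conjCLE : ℂ →L[ℝ] ℂ).hasFDerivAt.comp x hw.hasFDerivAt
  have a3 : HasFDerivAt (greenField k w e) _ x := (a1.mul a2).mul hw2.hasFDerivAt
  rw [a3.fderiv]
  have : ((‖fderiv ℝ w x e‖ ^ 2 : ℝ) : ℂ) = fderiv ℝ w x e * conj (fderiv ℝ w x e) := by
    rw [Complex.mul_conj, Complex.normSq_eq_norm_sq]
  rw [this]
  simp
  ring

/-- With the cutoff inserted, the Green field is a `C¹` field on the whole plane with compact support
inside `Q`: the factor `h(N |w|²)` vanishes off the closed set `{1 ≤ N |w|²}`, which lies in `Q`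
since `w` vanishes outside `Q`. -/
lemma greenField_props {χ : ℝ × ℝ → ℝ} {h : ℝ → ℝ} {w : ℝ × ℝ → ℂ} {Q : Set (ℝ × ℝ)} {N : ℝ}
    (hN : 0 < N) (hQ : IsOpen Q) (hχ : ContDiff ℝ 1 χ) (hχc : HasCompactSupport χ)
    (hh : ContDiff ℝ 1 h) (hh0 : ∀ t ≤ 1, h t = 0) (hw : Continuous w) (hw2 : ContDiffOn ℝ 2 w Q)
    (hw0 : ∀ x ∉ Q, w x = 0) (e : ℝ × ℝ) :
    ContDiff ℝ 1 (greenField (cutoff χ h w N) w e) ∧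
    HasCompactSupport (greenField (cutoff χ h w N) w e) ∧
    tsupport (greenField (cutoff χ h w N) w e) ⊆ Q := by
  have hsub : tsupport (greenField (cutoff χ h w N) w e) ⊆ Q := by
    have hcl : IsClosed {x | 1 ≤ N * ‖w x‖ ^ 2} :=
      isClosed_le continuous_const (by fun_prop)
    refine (closure_minimal (t := {x | 1 ≤ N * ‖w x‖ ^ 2}) ?_ hcl).trans ?_
    · intro x hx
      by_contra hlt
      simp only [mem_ofPred_eq, not_le] at hlt
      exact hx (by simp [greenField, cutoff, hh0 _ hlt.le])
    · intro x hx
      by_contra hxQ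
      simp only [mem_ofPred_eq, hw0 x hxQ] at hx
      norm_num at hx
  have hcs : HasCompactSupport (greenField (cutoff χ h w N) w e) := by
    have h1 : HasCompactSupport (fun x => χ (N⁻¹ • x)) :=
      hχc.comp_smul (inv_ne_zero hN.ne')
    refine h1.mono ?_
    intro x hx hx0
    exact hx (by simp only at hx0; simp [greenField, cutoff, hx0])
  refine ⟨contDiff_iff_contDiffAt.2 fun x => ?_, hcs, hsub⟩
  by_cases hx : x ∈ tsupport (greenField (cutoff χ h w N) w e)
  swap
  · exact contDiffAt_const.congr_of_eventuallyEq (notMem_tsupport_iff_eventuallyEq.1 hx)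
  have hxw : ContDiffAt ℝ 2 w x := hw2.contDiffAt (hQ.mem_nhds (hsub hx))
  have hxw1 : ContDiffAt ℝ 1 w x := hxw.of_le one_le_two
  have hfd : ContDiffAt ℝ 1 (fun y => fderiv ℝ w y e) x :=
    (hxw.fderiv_right (m := 1) (by norm_num)).clm_apply contDiffAt_const
  have hk : ContDiffAt ℝ 1 (cutoff χ h w N) x :=
    (hχ.contDiffAt.comp x (contDiffAt_id.const_smul N⁻¹)).mul
      (hh.contDiffAt.comp x (contDiffAt_const.mul (hxw1.norm_sq ℝ)))
  exact ((Complex.ofRealCLM.contDiff.contDiffAt.comp x hk).mul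
    ((Complex.conjCLE : ℂ →L[ℝ] ℂ).contDiff.contDiffAt.comp x hxw1)).mul hfd

/-- A bound, uniform in `N ≥ 1`, for the part of the divergence in which the cutoff is
differentiated. -/
lemma norm_remainder_le {χ : ℝ × ℝ → ℝ} {h : ℝ → ℝ} {w : ℝ × ℝ → ℂ} {N C₁ C₂ : ℝ} {x e : ℝ × ℝ}
    (hN : 1 ≤ N) (he : ‖e‖ ≤ 1) (hχ : ContDiff ℝ 1 χ) (hh : ContDiff ℝ 1 h)
    (hw : DifferentiableAt ℝ w x) (hχ1 : ∀ x, 0 ≤ χ x ∧ χ x ≤ 1) (hh1 : ∀ t, 0 ≤ h t ∧ h t ≤ 1)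
    (hC₁ : ∀ x, ‖fderiv ℝ χ x‖ ≤ C₁) (hC₂ : ∀ t, |t * deriv h t| ≤ C₂) :
    ‖((fderiv ℝ (cutoff χ h w N) x e : ℝ) : ℂ) * conj (w x) * fderiv ℝ w x e‖ ≤
      C₁ * (‖w x‖ ^ 2 + ‖fderiv ℝ w x e‖ ^ 2) + 2 * C₂ * ‖fderiv ℝ w x e‖ ^ 2 := by
  rw [(differentiableAt_cutoff_and_fderiv N hχ hh hw e).2]
  set u := fderiv ℝ w x e
  set t := N * ‖w x‖ ^ 2 with ht
  have hC₁0 : 0 ≤ C₁ := (norm_nonneg _).trans (hC₁ 0)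
  have b1 : |N⁻¹ * fderiv ℝ χ (N⁻¹ • x) e * h t| ≤ C₁ := by
    rw [abs_mul, abs_mul]
    have i1 : |N⁻¹| ≤ 1 := by rw [abs_of_pos (by positivity)]; exact inv_le_one_of_one_le₀ hN
    have i2 : |fderiv ℝ χ (N⁻¹ • x) e| ≤ C₁ := by
      have := (fderiv ℝ χ (N⁻¹ • x)).le_of_opNorm_le_of_le (hC₁ _) he
      simpa using this
    have i3 : |h t| ≤ 1 := by rw [abs_of_nonneg (hh1 t).1]; exact (hh1 t).2
    calc |N⁻¹| * |fderiv ℝ χ (N⁻¹ • x) e| * |h t| ≤ 1 * C₁ * 1 := by gcongr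
      _ = C₁ := by ring
  have b2 : |χ (N⁻¹ • x) * (deriv h t * (N * (2 * inner ℝ (w x) u)))| * ‖w x‖ ≤
      2 * C₂ * ‖u‖ := by
    have j1 : |χ (N⁻¹ • x)| ≤ 1 := by rw [abs_of_nonneg (hχ1 _).1]; exact (hχ1 _).2
    have j2 : |inner ℝ (w x) u| ≤ ‖w x‖ * ‖u‖ := abs_real_inner_le_norm _ _
    have j3 : |t * deriv h t| = N * ‖w x‖ ^ 2 * |deriv h t| := by
      rw [abs_mul, ht, abs_of_nonneg (by positivity : 0 ≤ N * ‖w x‖ ^ 2)]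
    have hN0 : 0 ≤ N := by linarith
    rw [abs_mul, abs_mul, abs_mul, abs_mul, abs_of_nonneg hN0, abs_two]
    calc |χ (N⁻¹ • x)| * (|deriv h t| * (N * (2 * |inner ℝ (w x) u|))) * ‖w x‖
        ≤ 1 * (|deriv h t| * (N * (2 * (‖w x‖ * ‖u‖)))) * ‖w x‖ := by gcongr
      _ = 2 * |t * deriv h t| * ‖u‖ := by rw [j3]; ring
      _ ≤ 2 * C₂ * ‖u‖ := by gcongr; exact hC₂ t
  rw [norm_mul, norm_mul, Complex.norm_real, RCLike.norm_conj, Real.norm_eq_abs]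
  set A := N⁻¹ * fderiv ℝ χ (N⁻¹ • x) e * h t
  set B := χ (N⁻¹ • x) * (deriv h t * (N * (2 * inner ℝ (w x) u)))
  calc |A + B| * ‖w x‖ * ‖u‖ ≤ (|A| + |B|) * ‖w x‖ * ‖u‖ := by gcongr; exact abs_add_le A B
    _ = |A| * (‖w x‖ * ‖u‖) + (|B| * ‖w x‖) * ‖u‖ := by ring
    _ ≤ C₁ * (‖w x‖ ^ 2 + ‖u‖ ^ 2) + (2 * C₂ * ‖u‖) * ‖u‖ := by
      gcongr
      nlinarith [sq_nonneg (‖w x‖ - ‖u‖), sq_nonneg (‖w x‖), sq_nonneg ‖u‖]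
    _ = _ := by ring

/-- At a fixed point where `w ≠ 0` the cutoff is eventually `1` with zero derivative. -/
lemma eventually_cutoff {χ : ℝ × ℝ → ℝ} {h : ℝ → ℝ} {w : ℝ × ℝ → ℂ} {x : ℝ × ℝ}
    (hχ : ContDiff ℝ 1 χ) (hh : ContDiff ℝ 1 h) (hw : DifferentiableAt ℝ w x)
    (hχ1 : ∀ᶠ x in 𝓝 0, χ x = 1 ∧ fderiv ℝ χ x = 0)
    (hh1 : ∀ t, 2 ≤ t → h t = 1) (hh2 : ∀ t, 2 < t → deriv h t = 0) (hx : w x ≠ 0) :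
    ∀ᶠ N : ℝ in atTop, cutoff χ h w N x = 1 ∧ ∀ e, fderiv ℝ (cutoff χ h w N) x e = 0 := by
  have t1 : Tendsto (fun N : ℝ => N⁻¹ • x) atTop (𝓝 0) := by
    simpa using (tendsto_inv_atTop_zero (𝕜 := ℝ)).smul_const x
  have t2 : Tendsto (fun N : ℝ => N * ‖w x‖ ^ 2) atTop atTop :=
    tendsto_id.atTop_mul_const (by positivity)
  filter_upwards [t1.eventually hχ1, t2.eventually_gt_atTop 2] with N h1 h2
  refine ⟨by simp [cutoff, h1.1, hh1 _ h2.le], fun e => ?_⟩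
  rw [(differentiableAt_cutoff_and_fderiv N hχ hh hw e).2]
  simp [h1.2, hh2 _ h2]

/-- `ω²` is not a nonnegative real, so it cannot be a quotient `A / B` of nonnegative reals. -/
lemma eq_zero_of_ofReal_eq_sq_mul {ω : ℂ} (hω : 0 < ω.im) {A B : ℝ} (hA : 0 ≤ A) (hB : 0 ≤ B)
    (h : (A : ℂ) - ω ^ 2 * (B : ℂ) = 0) : B = 0 := by
  by_contra hne
  have hre := congrArg Complex.re h
  have him := congrArg Complex.im h
  simp [pow_two] at hre him
  have hp : ω.re = 0 := by
    rcases him with him | him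
    · have : 2 * ω.re * ω.im = 0 := by linarith
      simpa [hω.ne'] using this
    · exact absurd him hne
  rw [hp] at hre
  have : 0 < B := lt_of_le_of_ne hB (Ne.symm hne)
  have : 0 < ω.im * ω.im * B := by positivity
  linarith

/-! ### Partial derivatives along slices -/

lemma deriv_fst_slice {E : Type*} [NormedAddCommGroup E] [NormedSpace ℝ E] {f : ℝ × ℝ → E}
    {x : ℝ × ℝ} (hf : DifferentiableAt ℝ f x) :
    deriv (fun s => f (s, x.2)) x.1 = fderiv ℝ f x (1, 0) := by
  have h1 : HasDerivAt (fun s : ℝ => (s, x.2)) ((1 : ℝ), (0 : ℝ)) x.1 :=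
    (hasDerivAt_id x.1).prodMk (hasDerivAt_const x.1 x.2)
  exact (HasFDerivAt.comp_hasDerivAt (f := fun s : ℝ => (s, x.2)) x.1 hf.hasFDerivAt h1).deriv

lemma deriv_snd_slice {E : Type*} [NormedAddCommGroup E] [NormedSpace ℝ E] {f : ℝ × ℝ → E}
    {x : ℝ × ℝ} (hf : DifferentiableAt ℝ f x) :
    deriv (fun s => f (x.1, s)) x.2 = fderiv ℝ f x (0, 1) := by
  have h1 : HasDerivAt (fun s : ℝ => (x.1, s)) ((0 : ℝ), (1 : ℝ)) x.2 :=
    (hasDerivAt_const x.2 x.1).prodMk (hasDerivAt_id x.2)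
  exact (HasFDerivAt.comp_hasDerivAt (f := fun s : ℝ => (x.1, s)) x.2 hf.hasFDerivAt h1).deriv

lemma laplacian_eq {w : ℝ × ℝ → ℂ} {Q : Set (ℝ × ℝ)} (hQ : IsOpen Q) (hw : ContDiffOn ℝ 2 w Q)
    {x : ℝ × ℝ} (hx : x ∈ Q) :
    deriv (fun s : ℝ => deriv (fun s' : ℝ => w (s', x.2)) s) x.1 =
        fderiv ℝ (fun y => fderiv ℝ w y (1, 0)) x (1, 0) ∧
      deriv (fun s : ℝ => deriv (fun s' : ℝ => w (x.1, s')) s) x.2 =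
        fderiv ℝ (fun y => fderiv ℝ w y (0, 1)) x (0, 1) := by
  have hd : ∀ y ∈ Q, DifferentiableAt ℝ w y := fun y hy =>
    (hw.contDiffAt (hQ.mem_nhds hy)).differentiableAt two_ne_zero
  have hd2 : ∀ e, DifferentiableAt ℝ (fun y => fderiv ℝ w y e) x := fun e =>
    (((hw.contDiffAt (hQ.mem_nhds hx)).fderiv_right (m := 1) (by norm_num)).clm_apply
      contDiffAt_const).differentiableAt one_ne_zero
  constructor
  · rw [← deriv_fst_slice (hd2 (1, 0))]
    refine EventuallyEq.deriv_eq ?_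
    have hc : ContinuousAt (fun s : ℝ => (s, x.2)) x.1 := by fun_prop
    filter_upwards [hc.preimage_mem_nhds (hQ.mem_nhds hx)] with s hs
    exact deriv_fst_slice (x := (s, x.2)) (hd _ hs)
  · rw [← deriv_snd_slice (hd2 (0, 1))]
    refine EventuallyEq.deriv_eq ?_
    have hc : ContinuousAt (fun s : ℝ => (x.1, s)) x.2 := by fun_prop
    filter_upwards [hc.preimage_mem_nhds (hQ.mem_nhds hx)] with s hs
    exact deriv_snd_slice (x := (x.1, s)) (hd _ hs)

/-! ### The energy identity and uniqueness -/

/-- The energy identity `∫_Q 1_{w ≠ 0} |∇w|² = ω² ∫_Q |w|²`. The indicator arises because the cutoffs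
vanish wherever `w` does. -/
theorem green_identity {ω : ℂ} {Q : Set (ℝ × ℝ)} (hQ : IsOpen Q)
    {w : ℝ × ℝ → ℂ} (hw : Continuous w) (hw2 : ContDiffOn ℝ 2 w Q)
    (hpde : ∀ x ∈ Q, fderiv ℝ (fun y => fderiv ℝ w y (1, 0)) x (1, 0) +
      fderiv ℝ (fun y => fderiv ℝ w y (0, 1)) x (0, 1) + ω ^ 2 * w x = 0)
    (hw0 : ∀ x ∉ Q, w x = 0)
    (hL2 : IntegrableOn (fun x => ‖w x‖ ^ 2) Q)
    (hL2grad : IntegrableOn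
      (fun x => ‖fderiv ℝ w x (1, 0)‖ ^ 2 + ‖fderiv ℝ w x (0, 1)‖ ^ 2) Q) :
    ((∫ x in Q, {x | w x ≠ 0}.indicator
      (fun x => ‖fderiv ℝ w x (1, 0)‖ ^ 2 + ‖fderiv ℝ w x (0, 1)‖ ^ 2) x : ℝ) : ℂ) -
      ω ^ 2 * ((∫ x in Q, ‖w x‖ ^ 2 : ℝ) : ℂ) = 0 := by
  obtain ⟨h, hh, hh01, hh0, hh1, hh', C₂, hC₂⟩ := exists_level_cutoff
  obtain ⟨χ, hχ, hχc, hχ01, hχ1, C₁, hC₁⟩ := exists_space_cutoff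
  set a : ℝ × ℝ → ℝ := fun x => ‖fderiv ℝ w x (1, 0)‖ ^ 2 + ‖fderiv ℝ w x (0, 1)‖ ^ 2 with ha
  set S : Set (ℝ × ℝ) := {x | w x ≠ 0} with hS
  have hSo : MeasurableSet S := (isOpen_ne_fun hw continuous_const).measurableSet
  have hd : ∀ y ∈ Q, DifferentiableAt ℝ w y := fun y hy =>
    (hw2.contDiffAt (hQ.mem_nhds hy)).differentiableAt two_ne_zero
  have hd2 : ∀ y ∈ Q, ∀ e, DifferentiableAt ℝ (fun y => fderiv ℝ w y e) y := fun y hy e =>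
    (((hw2.contDiffAt (hQ.mem_nhds hy)).fderiv_right (m := 1) (by norm_num)).clm_apply
      contDiffAt_const).differentiableAt one_ne_zero
  let k : ℕ → ℝ × ℝ → ℝ := fun n => cutoff χ h w ((n : ℝ) + 1)
  have hNpos : ∀ n : ℕ, (0 : ℝ) < (n : ℝ) + 1 := fun n => by positivity
  have hN1 : ∀ n : ℕ, (1 : ℝ) ≤ (n : ℝ) + 1 := fun n => by simp
  have hprops := fun (n : ℕ) (e : ℝ × ℝ) =>
    greenField_props (hNpos n) hQ hχ hχc hh hh0 hw hw2 hw0 e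
  -- `G n` is the divergence of the truncated field, `R n e` its remainder in direction `e`.
  let R : ℕ → ℝ × ℝ → ℝ × ℝ → ℂ := fun n e x =>
    ((fderiv ℝ (k n) x e : ℝ) : ℂ) * conj (w x) * fderiv ℝ w x e
  let G : ℕ → ℝ × ℝ → ℂ := fun n x =>
    fderiv ℝ (greenField (k n) w (1, 0)) x (1, 0) + fderiv ℝ (greenField (k n) w (0, 1)) x (0, 1)
  have hcont : ∀ n e, Continuous (fun x => fderiv ℝ (greenField (k n) w e) x e) := fun n e =>
    ((hprops n e).1.continuous_fderiv one_ne_zero).clm_apply continuous_const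
  have hint : ∀ n e, Integrable (fun x => fderiv ℝ (greenField (k n) w e) x e) := fun n e =>
    (hcont n e).integrable_of_hasCompactSupport ((hprops n e).2.1.fderiv_apply ℝ e)
  have hG0 : ∀ n, ∫ x in Q, G n x = 0 := by
    intro n
    rw [setIntegral_eq_integral_of_forall_compl_eq_zero]
    · simp only [G]
      rw [integral_add (hint n _) (hint n _),
        integral_fderiv_apply_eq_zero (hprops n _).1 (hprops n _).2.1,
        integral_fderiv_apply_eq_zero (hprops n _).1 (hprops n _).2.1, add_zero]
    · intro x hx
      have hz : ∀ e, fderiv ℝ (greenField (k n) w e) x = 0 := fun e =>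
        image_eq_zero_of_notMem_tsupport
          fun hm => hx ((hprops n e).2.2 (tsupport_fderiv_subset ℝ hm))
      simp [G, hz]
  have hGQ : ∀ n, ∀ x ∈ Q, G n x = (k n x : ℂ) * ((a x : ℝ) - ω ^ 2 * ((‖w x‖ ^ 2 : ℝ) : ℂ)) +
      (R n (1, 0) x + R n (0, 1) x) := by
    intro n x hx
    have hk := fun e => (differentiableAt_cutoff_and_fderiv ((n : ℝ) + 1) hχ hh (hd x hx) e).1
    simp only [G, R]
    rw [fderiv_greenField (1, 0) (hk 0) (hd x hx) (hd2 x hx _),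
      fderiv_greenField (0, 1) (hk 0) (hd x hx) (hd2 x hx _)]
    have hn : ((‖w x‖ ^ 2 : ℝ) : ℂ) = w x * conj (w x) := by
      rw [Complex.mul_conj, Complex.normSq_eq_norm_sq]
    rw [hn, ha]
    push_cast
    linear_combination (k n x : ℂ) * conj (w x) * hpde x hx
  have hbound : ∀ n, ∀ x ∈ Q, ‖G n x‖ ≤
      (a x + ‖ω ^ 2‖ * ‖w x‖ ^ 2) + (C₁ * (2 * ‖w x‖ ^ 2 + a x) + 2 * C₂ * a x) := by
    intro n x hx
    have hr : ∀ e : ℝ × ℝ, ‖e‖ ≤ 1 → ‖R n e x‖ ≤ _ := fun e he =>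
      norm_remainder_le (hN1 n) he hχ hh (hd x hx) hχ01 hh01 hC₁ hC₂
    have hr1 := hr (1, 0) (by simp [Prod.norm_def])
    have hr2 := hr (0, 1) (by simp [Prod.norm_def])
    have hk1 : ‖(k n x : ℂ)‖ ≤ 1 := by
      have hk0 : 0 ≤ k n x := mul_nonneg (hχ01 _).1 (hh01 _).1
      rw [Complex.norm_real, Real.norm_of_nonneg hk0]
      exact mul_le_one₀ (hχ01 _).2 (hh01 _).1 (hh01 _).2
    have ha0 : 0 ≤ a x := by positivity
    have hm : ‖(a x : ℂ) - ω ^ 2 * ((‖w x‖ ^ 2 : ℝ) : ℂ)‖ ≤ a x + ‖ω ^ 2‖ * ‖w x‖ ^ 2 := by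
      refine (norm_sub_le _ _).trans_eq ?_
      rw [norm_mul, Complex.norm_real, Complex.norm_real, Real.norm_of_nonneg ha0,
        Real.norm_of_nonneg (by positivity)]
    rw [hGQ n x hx]
    refine (norm_add_le _ _).trans (add_le_add ?_ ((norm_add_le _ _).trans ?_))
    · rw [norm_mul]
      calc _ ≤ 1 * (a x + ‖ω ^ 2‖ * ‖w x‖ ^ 2) := by gcongr
        _ = _ := one_mul _
    · simp only [ha]
      linarith
  have hlim : ∀ x ∈ Q, Tendsto (fun n => G n x) atTop
      (𝓝 (((S.indicator a x : ℝ) : ℂ) - ω ^ 2 * ((‖w x‖ ^ 2 : ℝ) : ℂ))) := by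
    intro x hx
    by_cases hwx : w x = 0
    · have hxS : x ∉ S := by simp [hS, hwx]
      refine tendsto_const_nhds.congr fun n => ?_
      rw [hGQ n x hx]
      simp [R, k, hwx, hxS, cutoff, hh0 0 zero_le_one]
    · have hxS : x ∈ S := hwx
      have hev := (tendsto_atTop_add_const_right atTop (1 : ℝ)
        (tendsto_natCast_atTop_atTop (R := ℝ))).eventually
        (eventually_cutoff hχ hh (hd x hx) hχ1 hh1 hh' hwx)
      refine tendsto_const_nhds.congr' ?_
      filter_upwards [hev] with n hn
      rw [hGQ n x hx]
      simp [R, k, hn.1, hn.2, hxS]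
  have hSint : IntegrableOn (S.indicator a) Q := hL2grad.indicator hSo
  have hdom := tendsto_integral_of_dominated_convergence (μ := volume.restrict Q) _
    (fun n => ((hcont n (1, 0)).add (hcont n (0, 1))).aestronglyMeasurable)
    (((hL2grad.add (hL2.const_mul ‖ω ^ 2‖))).add
      ((((hL2.const_mul 2).add hL2grad).const_mul C₁).add (hL2grad.const_mul (2 * C₂))))
    (fun n => ae_restrict_of_forall_mem hQ.measurableSet (hbound n))
    (ae_restrict_of_forall_mem hQ.measurableSet hlim)
  have hzero := tendsto_nhds_unique hdom
    (tendsto_const_nhds.congr fun n => (hG0 n).symm)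
  rw [integral_sub hSint.ofReal (hL2.ofReal.const_mul _), integral_const_mul,
    integral_complex_ofReal, integral_complex_ofReal] at hzero
  exact hzero

/-- Uniqueness for the Helmholtz equation with complex wavenumber (`Im ω > 0`) in the plane
slit along the closed positive `x₁`-axis, with Dirichlet condition on the slit and
`H¹`-type square-integrability of the solution and its gradient. -/
theorem helmholtz_uniqueness_slit_plane (ω : ℂ) (hω : 0 < ω.im)
    (Q : Set (ℝ × ℝ)) (hQ : Q = {x : ℝ × ℝ | ¬ (0 ≤ x.1 ∧ x.2 = 0)})
    (w : ℝ × ℝ → ℂ) (hw_cont : Continuous w) (hw_smooth : ContDiffOn ℝ 2 w Q)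
    (hpde : ∀ x ∈ Q,
      deriv (fun s : ℝ => deriv (fun s' : ℝ => w (s', x.2)) s) x.1 +
        deriv (fun s : ℝ => deriv (fun s' : ℝ => w (x.1, s')) s) x.2 + ω^2 * w x = 0)
    (hbc : ∀ x₁ : ℝ, 0 ≤ x₁ → w (x₁, 0) = 0)
    (hL2 : IntegrableOn (fun x : ℝ × ℝ => ‖w x‖^2) Q)
    (hL2grad : IntegrableOn (fun x : ℝ × ℝ =>
        ‖deriv (fun s : ℝ => w (s, x.2)) x.1‖^2 +
        ‖deriv (fun s : ℝ => w (x.1, s)) x.2‖^2) Q) :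
    ∀ x : ℝ × ℝ, w x = 0 := by

  have hQo : IsOpen Q := by
    have hcl : IsClosed {x : ℝ × ℝ | 0 ≤ x.1 ∧ x.2 = 0} :=
      (isClosed_le continuous_const continuous_fst).inter
        (isClosed_eq continuous_snd continuous_const)
    rw [hQ]
    exact hcl.isOpen_compl
  have hw0 : ∀ x ∉ Q, w x = 0 := by
    rintro ⟨x₁, x₂⟩ hx
    rw [hQ] at hx
    simp only [mem_ofPred_eq, not_not] at hx
    obtain ⟨h1, rfl⟩ := hx
    exact hbc x₁ h1
  have hd : ∀ y ∈ Q, DifferentiableAt ℝ w y := fun y hy =>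
    (hw_smooth.contDiffAt (hQo.mem_nhds hy)).differentiableAt two_ne_zero
  have hgrad : IntegrableOn
      (fun x => ‖fderiv ℝ w x (1, 0)‖ ^ 2 + ‖fderiv ℝ w x (0, 1)‖ ^ 2) Q := by
    refine hL2grad.congr_fun (fun x hx => ?_) hQo.measurableSet
    simp only [deriv_fst_slice (hd x hx), deriv_snd_slice (hd x hx)]
  have key := green_identity (ω := ω) hQo hw_cont hw_smooth (fun x hx => by
    rw [← (laplacian_eq hQo hw_smooth hx).1, ← (laplacian_eq hQo hw_smooth hx).2]
    exact hpde x hx) hw0 hL2 hgrad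
  have hB := eq_zero_of_ofReal_eq_sq_mul hω
    (integral_nonneg fun x => indicator_nonneg (fun _ _ => by positivity) x)
    (integral_nonneg fun x => by positivity) key
  have hae := (setIntegral_eq_zero_iff_of_nonneg_ae
    (Eventually.of_forall fun x => by positivity) hL2).1 hB
  have heq : EqOn (fun x => ‖w x‖ ^ 2) 0 Q :=
    Measure.eqOn_open_of_ae_eq hae hQo (by fun_prop) continuousOn_const
  intro x
  by_cases hx : x ∈ Q
  · simpa using heq hx
  · exact hw0 x hx
end
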